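/- arXiv:1106.5480 — 2 statements merged into one kernel-verified Lean document; each statement's English description precedes it below -/
import Mathlib

section
/- Let P be a finite weakly graded poset with rank function rk which avoids 3+1. Then P is vigilant, i.e., every element of P is up-seeing or down-seeing. -/
def AvoidsThreePlusOne (P : Type*) [PartialOrder P] : Prop :=
  ¬ ∃ w x y z : P, x < y ∧ y < z ∧
      ¬(w ≤ x ∨ x ≤ w) ∧ ¬(w ≤ y ∨ y ≤ w) ∧ ¬(w ≤ z ∨ z ≤ w)

/-- `rk` is a rank function exhibiting `P` as weakly graded: it increases by one along
covers, and every connected component of the comparability graph contains an element of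
rank `0`. -/
def IsWeaklyGraded (P : Type*) [PartialOrder P] (rk : P → ℕ) : Prop :=
  (∀ a b : P, a ⋖ b → rk b = rk a + 1) ∧
  ∀ v : P, ∃ u : P, Relation.ReflTransGen (fun a b : P => a ≤ b ∨ b ≤ a) v u ∧ rk u = 0

/-- `v` is up-seeing if every element of the next rank set covers it. -/
def UpSeeing {P : Type*} [PartialOrder P] (rk : P → ℕ) (v : P) : Prop :=
  ∀ w : P, rk w = rk v + 1 → v ⋖ w

/-- `v` is down-seeing if it covers every element of the previous rank set. -/
def DownSeeing {P : Type*} [PartialOrder P] (rk : P → ℕ) (v : P) : Prop :=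
  ∀ w : P, rk w + 1 = rk v → w ⋖ v

def Vigilant {P : Type*} [PartialOrder P] (rk : P → ℕ) : Prop :=
  ∀ v : P, UpSeeing rk v ∨ DownSeeing rk v

/-!
Once some rank is at least `i + 2`, a path of comparabilities leading down to rank `0` must jump
from rank at least `i + 2` to rank at most `i`, which yields a chain `x < y < z` with `x` of rank
`i` and `z` of rank `i + 2`. Every element of rank at least `i + 2` is comparable to a member of
this chain, hence lies above `x`; interpolating below that element and arguing dually, any two
elements whose ranks differ by at least `2` are comparable. So if `a` is one rank above `v` and `w`
one rank below, there is a chain `w < c < a` with `c` in the rank set of `v`. Comparability of `v`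
with `w` or `a` gives a cover, and comparability with `c` forces `v = c`.
-/

open Relation

section StrictMono

variable {α β : Type*} [PartialOrder α] {f : α → β} {a b : α}

theorem le_of_symmGen_of_map_le [Preorder β] (hf : StrictMono f) (hab : SymmGen (· ≤ ·) a b)
    (h : f a ≤ f b) : a ≤ b := by
  rcases hab with hab | hba
  · exact hab
  · exact (hba.eq_of_not_lt fun hlt => (hf hlt).not_ge h).ge

theorem eq_of_symmGen_of_map_eq [Preorder β] (hf : StrictMono f) (hab : SymmGen (· ≤ ·) a b)
    (h : f a = f b) : a = b :=
  (le_of_symmGen_of_map_le hf hab h.le).antisymm (le_of_symmGen_of_map_le hf hab.symm h.ge)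

theorem lt_of_symmGen_of_map_lt [Preorder β] (hf : StrictMono f) (hab : SymmGen (· ≤ ·) a b)
    (h : f a < f b) : a < b :=
  (le_of_symmGen_of_map_le hf hab h.le).lt_of_ne (ne_of_apply_ne f h.ne)

theorem covBy_of_symmGen_of_map_covBy [Preorder β] (hf : StrictMono f)
    (hab : SymmGen (· ≤ ·) a b) (h : f a ⋖ f b) : a ⋖ b :=
  ⟨lt_of_symmGen_of_map_lt hf hab h.lt, fun _ hac hcb => h.2 (hf hac) (hf hcb)⟩

theorem exists_le_map_le_of_reflTransGen [LinearOrder β] (hf : StrictMono f) {i k : β}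
    (hik : i ⋖ k) (hjump : ∀ a b, a ≤ b → f a ≤ i → f b ≤ k) {u v : α}
    (hvu : ReflTransGen (SymmGen (· ≤ ·)) v u) (hu : f u ≤ i) : ∃ a ≤ v, f a ≤ i := by
  induction hvu using ReflTransGen.head_induction_on with
  | refl => exact ⟨u, le_rfl, hu⟩
  | @head s t hst _ ih =>
    obtain ⟨a, hat, ha⟩ := ih
    rcases hst with hst | hts
    · rcases hst.eq_or_lt with rfl | hlt
      · exact ⟨a, hat, ha⟩
      · exact ⟨s, le_rfl, hik.le_of_lt ((hf hlt).trans_le (hjump a t hat ha))⟩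
    · exact ⟨a, hat.trans hts, ha⟩

theorem exists_le_map_le_lt_map_of_reflTransGen [LinearOrder β] (hf : StrictMono f) {i k : β}
    (hik : i ⋖ k) {u v : α} (hvu : ReflTransGen (SymmGen (· ≤ ·)) v u) (hu : f u ≤ i)
    (hv : k < f v) : ∃ a b, a ≤ b ∧ f a ≤ i ∧ k < f b := by
  by_contra! hjump
  obtain ⟨a, hav, ha⟩ := exists_le_map_le_of_reflTransGen hf hik hjump hvu hu
  exact (hjump a v hav ha).not_gt hv

end StrictMono

section Rank

variable {P : Type*} [PartialOrder P] {rk : P → ℕ} {a b : P} {n : ℕ}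

theorem strictMono_of_covBy_rank_eq_add_one [LocallyFiniteOrder P]
    (hcov : ∀ a b : P, a ⋖ b → rk b = rk a + 1) : StrictMono rk :=
  (strictMono_iff_forall_covBy rk).2 fun a b hab => hcov a b hab ▸ Nat.lt_succ_self _

theorem exists_mem_Icc_rank_eq [IsStronglyAtomic P]
    (hcov : ∀ a b : P, a ⋖ b → rk b = rk a + 1) (hab : a ≤ b) (han : rk a ≤ n)
    (hnb : n ≤ rk b) : ∃ c ∈ Set.Icc a b, rk c = n := by
  induction n, han using Nat.le_induction with
  | base => exact ⟨a, ⟨le_rfl, hab⟩, rfl⟩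
  | succ n _ ih =>
    obtain ⟨c, ⟨hac, hcb⟩, hc⟩ := ih (by omega)
    have hcb' : c < b := hcb.lt_of_ne (ne_of_apply_ne rk (by omega))
    obtain ⟨d, hcd, hdb⟩ := exists_covBy_le_of_lt hcb'
    exact ⟨d, ⟨hac.trans hcd.le, hdb⟩, by rw [hcov c d hcd, hc]⟩

theorem exists_mem_Ioo_rank_eq [IsStronglyAtomic P]
    (hcov : ∀ a b : P, a ⋖ b → rk b = rk a + 1) (hab : a ≤ b) (han : rk a < n)
    (hnb : n < rk b) : ∃ c ∈ Set.Ioo a b, rk c = n := by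
  obtain ⟨c, ⟨hac, hcb⟩, rfl⟩ := exists_mem_Icc_rank_eq hcov hab han.le hnb.le
  exact ⟨c, ⟨hac.lt_of_ne (ne_of_apply_ne rk han.ne), hcb.lt_of_ne (ne_of_apply_ne rk hnb.ne)⟩, rfl⟩

theorem IsWeaklyGraded.exists_lt_lt_rank_eq (hwg : IsWeaklyGraded P rk)
    (hrk : StrictMono rk) {v : P} {i : ℕ} (hv : i + 2 ≤ rk v) :
    ∃ x y z : P, x < y ∧ y < z ∧ rk x = i ∧ rk z = i + 2 := by
  have : WellFoundedLT P := hrk.wellFoundedLT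
  obtain ⟨u, hvu, hu⟩ := hwg.2 v
  obtain ⟨a, b, hab, ha, hb⟩ := exists_le_map_le_lt_map_of_reflTransGen hrk
    (Order.covBy_add_one i) hvu (by omega) (by omega)
  obtain ⟨x, ⟨-, hxb⟩, hx⟩ := exists_mem_Icc_rank_eq hwg.1 hab ha (by omega)
  obtain ⟨z, ⟨hxz, -⟩, hz⟩ := exists_mem_Icc_rank_eq (n := i + 2) hwg.1 hxb (by omega) (by omega)
  obtain ⟨y, ⟨hxy, hyz⟩, -⟩ :=
    exists_mem_Ioo_rank_eq (n := i + 1) hwg.1 hxz (by omega) (by omega)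
  exact ⟨x, y, z, hxy, hyz, hx, hz⟩

end Rank

namespace AvoidsThreePlusOne

variable {P : Type*} [PartialOrder P]

theorem symmGen_of_lt_of_lt (havoid : AvoidsThreePlusOne P) {x y z : P} (hxy : x < y)
    (hyz : y < z) (w : P) :
    SymmGen (· ≤ ·) w x ∨ SymmGen (· ≤ ·) w y ∨ SymmGen (· ≤ ·) w z := by
  by_contra! h
  exact havoid ⟨w, x, y, z, hxy, hyz, h⟩

theorem min_lt_of_map_max_le {β : Type*} [Preorder β] {f : P → β} (havoid : AvoidsThreePlusOne P)
    (hf : StrictMono f) {x y z w : P} (hxy : x < y) (hyz : y < z) (hzw : f z ≤ f w) : x < w := by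
  rcases havoid.symmGen_of_lt_of_lt hxy hyz w with hw | hw | hw
  · exact lt_of_symmGen_of_map_lt hf hw.symm ((hf (hxy.trans hyz)).trans_le hzw)
  · exact hxy.trans_le (le_of_symmGen_of_map_le hf hw.symm ((hf hyz).le.trans hzw))
  · exact (hxy.trans hyz).trans_le (le_of_symmGen_of_map_le hf hw.symm hzw)

theorem lt_max_of_map_le_min {β : Type*} [Preorder β] {f : P → β} (havoid : AvoidsThreePlusOne P)
    (hf : StrictMono f) {x y z w : P} (hxy : x < y) (hyz : y < z) (hwx : f w ≤ f x) : w < z := by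
  rcases havoid.symmGen_of_lt_of_lt hxy hyz w with hw | hw | hw
  · exact (le_of_symmGen_of_map_le hf hw hwx).trans_lt (hxy.trans hyz)
  · exact (le_of_symmGen_of_map_le hf hw (hwx.trans (hf hxy).le)).trans_lt hyz
  · exact lt_of_symmGen_of_map_lt hf hw (hwx.trans_lt (hf (hxy.trans hyz)))

theorem lt_of_rank_add_two_le {rk : P → ℕ} (havoid : AvoidsThreePlusOne P)
    (hrk : StrictMono rk) (hwg : IsWeaklyGraded P rk) {a b : P} (hab : rk a + 2 ≤ rk b) :
    a < b := by
  have : WellFoundedLT P := hrk.wellFoundedLT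
  obtain ⟨x, y, z, hxy, hyz, hx, hz⟩ := hwg.exists_lt_lt_rank_eq hrk hab
  have hxb : x < b := havoid.min_lt_of_map_max_le hrk hxy hyz (hz.trans_le hab)
  obtain ⟨c, ⟨hxc, hcb⟩, -⟩ :=
    exists_mem_Ioo_rank_eq (n := rk a + 1) hwg.1 hxb.le (by omega) (by omega)
  exact havoid.lt_max_of_map_le_min hrk hxc hcb hx.ge

end AvoidsThreePlusOne

theorem vigilant_of_avoids31_general {P : Type*} [PartialOrder P] {rk : P → ℕ}
    (hrk : StrictMono rk) (hwg : IsWeaklyGraded P rk) (havoid : AvoidsThreePlusOne P) :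
    Vigilant rk := by
  have : WellFoundedLT P := hrk.wellFoundedLT
  refine fun v => or_iff_not_imp_left.2 fun hv w hwv => ?_
  obtain ⟨a, hav, hva⟩ : ∃ a, rk a = rk v + 1 ∧ ¬ v ⋖ a := by simpa [UpSeeing] using hv
  have hwa : w < a := havoid.lt_of_rank_add_two_le hrk hwg (by omega)
  obtain ⟨c, ⟨hwc, hca⟩, hcv⟩ :=
    exists_mem_Ioo_rank_eq (n := rk v) hwg.1 hwa.le (by omega) (by omega)
  have hwv_rk : rk w ⋖ rk v := Nat.covBy_iff_add_one_eq.2 hwv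
  have hva_rk : rk v ⋖ rk a := Nat.covBy_iff_add_one_eq.2 hav.symm
  rcases havoid.symmGen_of_lt_of_lt hwc hca v with hvw | hvc | hva'
  · exact covBy_of_symmGen_of_map_covBy hrk hvw.symm hwv_rk
  · obtain rfl : v = c := eq_of_symmGen_of_map_eq hrk hvc hcv.symm
    exact covBy_of_symmGen_of_map_covBy hrk (.of_le hwc.le) hwv_rk
  · exact absurd (covBy_of_symmGen_of_map_covBy hrk hva' hva_rk) hva

theorem vigilant_of_avoids31 (P : Type*) [PartialOrder P] [Fintype P]
    (rk : P → ℕ) (hwg : IsWeaklyGraded P rk) (havoid : AvoidsThreePlusOne P) :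
    Vigilant rk := by
  classical
  let _ : LocallyFiniteOrder P := Fintype.toLocallyFiniteOrder
  exact vigilant_of_avoids31_general (strictMono_of_covBy_rank_eq_add_one hwg.1) hwg havoid
end

section
/- Let P be a finite weakly graded poset with rank function rk. Suppose P is vigilant and any two elements v, w with rk(w) − rk(v) ≥ 2 are comparable. Then P avoids 3+1. -/
/-!
The ranks of two elements incomparable to a common element `w` differ by at most one: each of them
is within one of `rk w`, so a gap of two would put one just below `w` and the other just above `w`,
and by vigilance `w` is comparable to one of the two. The ends of a chain `x < y < z` have ranks at
least two apart, so no element is incomparable to both of them.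
-/

theorem IsWeaklyGraded.strictMono {P : Type*} [PartialOrder P] [LocallyFiniteOrder P] {rk : P → ℕ}
    (hwg : IsWeaklyGraded P rk) : StrictMono rk :=
  (strictMono_iff_forall_covBy rk).2 fun a b hab ↦
    hwg.1 a b hab ▸ Nat.lt_succ_self (rk a)

theorem Vigilant.rk_le_add_one_of_not_comparable {P : Type*} [PartialOrder P] {rk : P → ℕ}
    (hvig : Vigilant rk) (h2 : ∀ v w : P, rk v + 2 ≤ rk w → (v ≤ w ∨ w ≤ v)) {w x z : P}
    (hx : ¬(w ≤ x ∨ x ≤ w)) (hz : ¬(w ≤ z ∨ z ≤ w)) : rk z ≤ rk x + 1 := by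
  by_contra! hgap
  have hwx : rk w < rk x + 2 := not_le.1 fun h ↦ hx (h2 x w h).symm
  have hzw : rk z < rk w + 2 := not_le.1 fun h ↦ hz (h2 w z h)
  have hx_below : rk x + 1 = rk w := by omega
  have hz_above : rk z = rk w + 1 := by omega
  rcases hvig w with hup | hdown
  · exact hz (.inl (hup z hz_above).le)
  · exact hx (.inr (hdown x hx_below).le)

theorem avoids31_of_vigilant_general (P : Type*) [PartialOrder P]
    (rk : P → ℕ) (hrk : StrictMono rk) (hvig : Vigilant rk)
    (h2 : ∀ v w : P, rk v + 2 ≤ rk w → (v ≤ w ∨ w ≤ v)) :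
    AvoidsThreePlusOne P := by
  rintro ⟨w, x, y, z, hxy, hyz, hx, -, hz⟩
  have hrk_xy : rk x < rk y := hrk hxy
  have hrk_yz : rk y < rk z := hrk hyz
  have hrk_zx : rk z ≤ rk x + 1 := hvig.rk_le_add_one_of_not_comparable h2 hx hz
  omega

theorem avoids31_of_vigilant (P : Type*) [PartialOrder P] [Fintype P]
    (rk : P → ℕ) (hwg : IsWeaklyGraded P rk) (hvig : Vigilant rk)
    (h2 : ∀ v w : P, rk v + 2 ≤ rk w → (v ≤ w ∨ w ≤ v)) :
    AvoidsThreePlusOne P := by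
  classical
  let _ : LocallyFiniteOrder P := Fintype.toLocallyFiniteOrder
  exact avoids31_of_vigilant_general P rk hwg.strictMono hvig h2
end
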